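/- Let ν* = min{bᵀy : Aᵀy ≥ w, y ≥ 0} be finite, c ∈ ℤ_{>0}^n, B > 0, and for λ ≥ 0 define L(λ) = min{bᵀy − λ(B − cᵀr) : Aᵀy + r ≥ w, y ≥ 0, r ≥ 0} restricted to solutions with r integral. Then for every λ ≥ ν*, the choice r = 0 is optimal, and any maximizer λ* of L satisfies λ* ≤ ν*. -/

import Mathlib

open Finset Matrix

/-!
For `λ ≥ ν*` no nonzero slack is worth its price: if `r ≠ 0` is integral and nonnegative then
`cᵀr ≥ 1`, so `r` costs at least `λ ≥ ν*`, whereas a near-optimal `y` without slack costs about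
`ν*`. Hence `L(λ) = ν* - λB` on `[ν*, ∞)`, which is strictly decreasing because `B > 0`, and a
maximizer of `L` cannot lie beyond `ν*`.
-/

section Covering

variable {ι κ K : Type*} [Fintype κ] [CommRing K] [PartialOrder K]

/-- Feasibility of `y` for the covering program with constraint matrix `Aᵀ` and demand `w`. -/
def IsCovering (A : Matrix κ ι K) (w : ι → K) (y : κ → K) : Prop :=
  w ≤ Aᵀ *ᵥ y ∧ 0 ≤ y

/-- Feasibility of `(y, r)` for the relaxed covering program, in which the slack `r` makes up for
unmet demand. Integrality of `r` is part of feasibility; `y` remains fractional. -/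
def IsRelaxedCovering (A : Matrix κ ι K) (w : ι → K) (y : κ → K) (r : ι → K) : Prop :=
  w ≤ Aᵀ *ᵥ y + r ∧ 0 ≤ y ∧ 0 ≤ r ∧ ∀ i, ∃ k : ℤ, r i = k

theorem isRelaxedCovering_zero_iff {A : Matrix κ ι K} {w : ι → K} {y : κ → K} :
    IsRelaxedCovering A w y 0 ↔ IsCovering A w y := by
  have integral_zero : ∀ i, ∃ k : ℤ, (0 : ι → K) i = k := fun _ ↦ ⟨0, by simp⟩
  simp only [IsRelaxedCovering, IsCovering, add_zero, le_refl, integral_zero, implies_true,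
    and_true]

theorem nonneg_of_isGLB_covering [IsOrderedRing K] {A : Matrix κ ι K} {b : κ → K} {w : ι → K}
    {ν : K} (hb : 0 ≤ b) (hν : IsGLB ((b ⬝ᵥ ·) '' {y | IsCovering A w y}) ν) : 0 ≤ ν :=
  hν.2 <| Set.forall_mem_image.2 fun _ hy ↦ dotProduct_nonneg_of_nonneg hb hy.2

end Covering

theorem one_le_dotProduct_of_integral {ι K : Type*} [Fintype ι] [Ring K] [PartialOrder K]
    [IsStrictOrderedRing K] {c r : ι → K} (hc : ∀ i, 1 ≤ c i) (hr : 0 ≤ r)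
    (hint : ∀ i, ∃ k : ℤ, r i = k) (hne : r ≠ 0) : 1 ≤ c ⬝ᵥ r := by
  obtain ⟨i, hi⟩ := Function.ne_iff.mp hne
  have one_le_entry : 1 ≤ r i := by
    have hpos : 0 < r i := (hr i).lt_of_ne' hi
    obtain ⟨k, hk⟩ := hint i
    rw [hk] at hpos ⊢
    exact_mod_cast hpos
  calc
    1 ≤ r i := one_le_entry
    _ ≤ c i * r i := le_mul_of_one_le_left (hr i) (hc i)
    _ ≤ c ⬝ᵥ r := single_le_sum (f := fun j ↦ c j * r j)
      (fun j _ ↦ mul_nonneg (zero_le_one.trans (hc j)) (hr j)) (mem_univ i)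

section Lagrangian

variable {ι κ K : Type*} [Fintype ι] [Fintype κ] [CommRing K]

/-- The Lagrangian `bᵀy - λ(B - cᵀr)` of the relaxed covering program, with multiplier `lam`. -/
def lagrangian (b : κ → K) (c : ι → K) (B lam : K) (y : κ → K) (r : ι → K) : K :=
  b ⬝ᵥ y - lam * (B - c ⬝ᵥ r)

theorem lagrangian_zero_right (b : κ → K) (c : ι → K) (B lam : K) (y : κ → K) :
    lagrangian b c B lam y 0 = b ⬝ᵥ y - lam * B := by
  rw [lagrangian, dotProduct_zero, sub_zero]

/-- The values of the Lagrangian on the relaxed coverings; `L(λ)` is their infimum. -/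
def lagrangianValues [PartialOrder K] (A : Matrix κ ι K) (b : κ → K) (w c : ι → K) (B lam : K) :
    Set K :=
  {v | ∃ y r, IsRelaxedCovering A w y r ∧ v = lagrangian b c B lam y r}

section PartialOrder

variable [PartialOrder K] [IsStrictOrderedRing K] {A : Matrix κ ι K} {b : κ → K} {w c : ι → K}
  {B ν lam : K}

theorem IsRelaxedCovering.sub_le_lagrangian {y : κ → K} {r : ι → K}
    (hyr : IsRelaxedCovering A w y r) (hb : 0 ≤ b) (hc : ∀ i, 1 ≤ c i)
    (hν : ν ∈ lowerBounds ((b ⬝ᵥ ·) '' {y | IsCovering A w y})) (hlam₀ : 0 ≤ lam)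
    (hlam : ν ≤ lam) : ν - lam * B ≤ lagrangian b c B lam y r := by
  rcases eq_or_ne r 0 with rfl | hne
  · rw [lagrangian_zero_right]
    exact sub_le_sub_right
      (hν <| Set.mem_image_of_mem _ <| isRelaxedCovering_zero_iff.mp hyr) _
  · obtain ⟨-, hy, hr, hint⟩ := hyr
    have slack_cost : ν ≤ lam * (c ⬝ᵥ r) :=
      hlam.trans <| le_mul_of_one_le_right hlam₀ <| one_le_dotProduct_of_integral hc hr hint hne
    calc
      ν - lam * B ≤ lam * (c ⬝ᵥ r) - lam * B := sub_le_sub_right slack_cost _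
      _ ≤ b ⬝ᵥ y + (lam * (c ⬝ᵥ r) - lam * B) :=
        le_add_of_nonneg_left (dotProduct_nonneg_of_nonneg hb hy)
      _ = lagrangian b c B lam y r := by rw [lagrangian]; ring

theorem isGLB_lagrangianValues (hb : 0 ≤ b) (hc : ∀ i, 1 ≤ c i)
    (hν : IsGLB ((b ⬝ᵥ ·) '' {y | IsCovering A w y}) ν) (hlam : ν ≤ lam) :
    IsGLB (lagrangianValues A b w c B lam) (ν - lam * B) := by
  constructor
  · rintro _ ⟨y, r, hyr, rfl⟩
    exact hyr.sub_le_lagrangian hb hc hν.1 ((nonneg_of_isGLB_covering hb hν).trans hlam) hlam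
  · intro u hu
    refine le_sub_iff_add_le.mpr <| hν.2 <| Set.forall_mem_image.2 fun y hy ↦ ?_
    rw [← le_sub_iff_add_le, ← lagrangian_zero_right b c]
    exact hu ⟨y, 0, isRelaxedCovering_zero_iff.mpr hy, rfl⟩

end PartialOrder

theorem lagrangian_multiplier_bound_general [LinearOrder K] [IsStrictOrderedRing K]
    {A : Matrix κ ι K} {b : κ → K} {w c : ι → K} {B ν : K} {L : K → K}
    (hb : 0 ≤ b) (hc : ∀ i, 1 ≤ c i) (hB : 0 < B)
    (hν : IsGLB ((b ⬝ᵥ ·) '' {y | IsCovering A w y}) ν)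
    (hL : ∀ lam, 0 ≤ lam → IsGLB (lagrangianValues A b w c B lam) (L lam)) :
    (∀ lam, ν ≤ lam → L lam = ν - lam * B) ∧
      ∀ lamstar, IsMaxOn L (Set.Ici 0) lamstar → lamstar ≤ ν := by
  have hν₀ : 0 ≤ ν := nonneg_of_isGLB_covering hb hν
  have L_eq : ∀ lam, ν ≤ lam → L lam = ν - lam * B := fun lam hlam ↦
    (hL lam (hν₀.trans hlam)).unique (isGLB_lagrangianValues hb hc hν hlam)
  refine ⟨L_eq, fun lamstar hmax ↦ le_of_not_gt fun hlt ↦ ?_⟩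
  have L_lt : L lamstar < L ν := by
    rw [L_eq lamstar hlt.le, L_eq ν le_rfl]
    exact sub_lt_sub_left (mul_lt_mul_of_pos_right hlt hB) ν
  exact L_lt.not_ge (hmax hν₀)

end Lagrangian

/-- For `λ ≥ ν*`, the choice `r = 0` is optimal in the Lagrangian LP (with
integral `r`), so `L(λ) = ν* - λB`; consequently any maximizer `λ*` of `L`
satisfies `λ* ≤ ν*`. -/
theorem lagrangian_multiplier_bound {m n : ℕ} (A : Matrix (Fin m) (Fin n) ℝ)
    (b : Fin m → ℝ) (hb : ∀ j, 0 ≤ b j)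
    (w : Fin n → ℝ) (hw : ∀ i, w i = 0 ∨ w i = 1)
    (c : Fin n → ℝ) (hc : ∀ i, ∃ k : ℤ, c i = k ∧ 0 < k)
    (B : ℝ) (hB : ∃ k : ℤ, B = k ∧ 0 < k)
    (ystar : Fin m → ℝ)
    (hystarFeas : (∀ i, w i ≤ Aᵀ.mulVec ystar i) ∧ ∀ j, 0 ≤ ystar j)
    (hystarOpt : ∀ y : Fin m → ℝ, (∀ i, w i ≤ Aᵀ.mulVec y i) → (∀ j, 0 ≤ y j) →
      ∑ j, b j * ystar j ≤ ∑ j, b j * y j)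
    (L : ℝ → ℝ)
    (hL : ∀ lam : ℝ, 0 ≤ lam →
      IsLeast {v : ℝ | ∃ y : Fin m → ℝ, ∃ r : Fin n → ℝ,
        (∀ i, w i ≤ Aᵀ.mulVec y i + r i) ∧ (∀ j, 0 ≤ y j) ∧ (∀ i, 0 ≤ r i) ∧
        (∀ i, ∃ k : ℤ, r i = k) ∧
        v = ∑ j, b j * y j - lam * (B - ∑ i, c i * r i)} (L lam)) :
    (∀ lam : ℝ, ∑ j, b j * ystar j ≤ lam →
        L lam = ∑ j, b j * ystar j - lam * B) ∧
      ∀ lamstar : ℝ, 0 ≤ lamstar → (∀ lam : ℝ, 0 ≤ lam → L lam ≤ L lamstar) →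
        lamstar ≤ ∑ j, b j * ystar j := by
  have one_le_c : ∀ i, 1 ≤ c i := fun i ↦ by
    obtain ⟨k, hk, hpos⟩ := hc i
    rw [hk]
    exact_mod_cast hpos
  have B_pos : 0 < B := by
    obtain ⟨k, rfl, hpos⟩ := hB
    exact_mod_cast hpos
  have hν : IsLeast ((b ⬝ᵥ ·) '' {y | IsCovering A w y}) (b ⬝ᵥ ystar) :=
    ⟨Set.mem_image_of_mem _ hystarFeas,
      Set.forall_mem_image.2 fun y hy ↦ hystarOpt y hy.1 hy.2⟩
  have hL' : ∀ lam, 0 ≤ lam → IsGLB (lagrangianValues A b w c B lam) (L lam) := fun lam hlam ↦ by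
    simpa only [lagrangianValues, IsRelaxedCovering, lagrangian, dotProduct, Pi.le_def,
      Pi.add_apply, Pi.zero_apply, and_assoc] using (hL lam hlam).isGLB
  obtain ⟨L_eq, le_ν⟩ := lagrangian_multiplier_bound_general hb one_le_c B_pos hν.isGLB hL'
  exact ⟨L_eq, fun lamstar _ hmax ↦ le_ν lamstar fun lam hlam ↦ hmax lam hlam⟩
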